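/- arXiv:2002.01274 — 2 statements merged into one kernel-verified Lean document; each statement's English description precedes it below -/
import Mathlib

section
/- Corrected Hund–von Neumann–Wigner theorem for 2×2 hermitean pencils (crossing implies decomposability): let F and G be hermitean 2×2 complex matrices and suppose that for some real t₀ the matrix F + t₀•G has a repeated eigenvalue (its characteristic polynomial is (X − C(μ))² for some μ ∈ ℂ). Then the flow A(t) = F + t•G is structurally decomposable: there exists one fixed unitary 2×2 matrix U such that Uᴴ * (F + t•G) * U is a diagonal matrix for every real t. -/
open Matrix

/-! A hermitean matrix with a single eigenvalue `μ` is `μ • 1`, so a crossing of all eigenvalues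
at `t₀` forces `F + t • G = μ • 1 + (t - t₀) • G`: the whole pencil lies in the span of `1` and
`G`, and every unitary that diagonalizes `G` diagonalizes all of it. -/

theorem spectrum_subset_singleton_of_charpoly_eq_X_sub_C_pow {K n : Type*} [Field K] [Fintype n]
    [DecidableEq n] {A : Matrix n n K} {μ : K} {k : ℕ}
    (h : A.charpoly = (Polynomial.X - Polynomial.C μ) ^ k) : spectrum K A ⊆ {μ} := by
  intro x hx
  have hroot : ((Polynomial.X - Polynomial.C μ) ^ k).eval x = 0 :=
    h ▸ mem_spectrum_iff_isRoot_charpoly.mp hx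
  rw [Polynomial.eval_pow, Polynomial.eval_sub, Polynomial.eval_X, Polynomial.eval_C] at hroot
  exact sub_eq_zero.mp (eq_zero_of_pow_eq_zero hroot)

theorem add_smul_eq_add_sub_smul_of_add_smul_eq {R M : Type*} [Ring R] [AddCommGroup M]
    [Module R M] {a b c : M} {s : R} (h : a + s • b = c) (t : R) :
    a + t • b = c + (t - s) • b := by
  rw [← h, sub_smul, add_assoc, add_sub_cancel]

section RCLike

variable {𝕜 n : Type*} [RCLike 𝕜] [Fintype n] [DecidableEq n]

theorem eq_smul_one_of_isHermitian_of_spectrum_subset_singleton {A : Matrix n n 𝕜}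
    (hA : A.IsHermitian) {μ : 𝕜} (h : spectrum 𝕜 A ⊆ {μ}) : A = μ • 1 := by
  have heigenvalues : (RCLike.ofReal ∘ hA.eigenvalues : n → 𝕜) = fun _ ↦ μ :=
    funext fun i ↦ h (spectrum.algebraMap_mem 𝕜 (hA.eigenvalues_mem_spectrum_real i))
  rw [hA.spectral_theorem, heigenvalues, ← smul_one_eq_diagonal, map_smul, map_one]

theorem isDiag_star_eigenvectorUnitary_mul_mul {A : Matrix n n 𝕜} (hA : A.IsHermitian) :
    (star (hA.eigenvectorUnitary : Matrix n n 𝕜) * A * hA.eigenvectorUnitary).IsDiag := by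
  rw [← Unitary.conjStarAlgAut_star_apply (S := 𝕜), hA.conjStarAlgAut_star_eigenvectorUnitary]
  exact isDiag_diagonal _

theorem isDiag_star_mul_smul_one_add_smul_mul {R : Type*} [CommRing R] [StarRing R]
    {A : Matrix n n R} {U : unitaryGroup n R} (h : (star (U : Matrix n n R) * A * U).IsDiag)
    (a b : R) : (star (U : Matrix n n R) * (a • 1 + b • A) * U).IsDiag := by
  have hconj : star (U : Matrix n n R) * (a • 1 + b • A) * U
      = a • 1 + b • (star (U : Matrix n n R) * A * U) := by
    simp only [mul_add, add_mul, mul_smul_comm, smul_mul_assoc, mul_one,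
      Unitary.coe_star_mul_self]
  rw [hconj]
  exact (isDiag_smul_one n a).add (h.smul b)

theorem hermitean_pencil_crossing_implies_decomposable_general {F G : Matrix n n 𝕜}
    (hF : F.IsHermitian) (hG : G.IsHermitian) {t₀ : ℝ} {μ : 𝕜}
    (hcross : spectrum 𝕜 (F + (t₀ : 𝕜) • G) ⊆ {μ}) :
    ∃ U : unitaryGroup n 𝕜, ∀ t : 𝕜, (star (U : Matrix n n 𝕜) * (F + t • G) * U).IsDiag := by
  have hherm : (F + (t₀ : 𝕜) • G).IsHermitian := hF.add (hG.smul (RCLike.conj_ofReal t₀))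
  have hscalar : F + (t₀ : 𝕜) • G = μ • 1 :=
    eq_smul_one_of_isHermitian_of_spectrum_subset_singleton hherm hcross
  refine ⟨hG.eigenvectorUnitary, fun t ↦ ?_⟩
  rw [add_smul_eq_add_sub_smul_of_add_smul_eq hscalar t]
  exact isDiag_star_mul_smul_one_add_smul_mul (isDiag_star_eigenvectorUnitary_mul_mul hG) _ _

end RCLike

/-- Corrected Hund–von Neumann–Wigner theorem for 2×2 hermitean pencils: if the hermitean
pencil `F + t•G` has a repeated eigenvalue at some `t₀`, then the flow is structurally
decomposable: one fixed unitary `U` diagonalizes `F + t•G` for every real `t`. -/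
theorem hermitean_pencil_crossing_implies_decomposable
    (F G : Matrix (Fin 2) (Fin 2) ℂ) (hF : Fᴴ = F) (hG : Gᴴ = G)
    (t₀ : ℝ) (μ : ℂ)
    (hcross : (F + (t₀ : ℂ) • G).charpoly = (Polynomial.X - Polynomial.C μ) ^ 2) :
    ∃ U : Matrix (Fin 2) (Fin 2) ℂ, Uᴴ * U = 1 ∧
      ∀ t : ℝ, ∀ i j : Fin 2, i ≠ j → (Uᴴ * (F + (t : ℂ) • G) * U) i j = 0 := by
  obtain ⟨U, hU⟩ := hermitean_pencil_crossing_implies_decomposable_general hF hG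
    (spectrum_subset_singleton_of_charpoly_eq_X_sub_C_pow hcross)
  exact ⟨U, Unitary.coe_star_mul_self U, fun t _ _ hij ↦ hU t hij⟩
end

section
/- Hund–von Neumann–Wigner no-crossing theorem for indecomposable 2×2 hermitean pencils: let F and G be hermitean 2×2 complex matrices and suppose there exists NO fixed unitary 2×2 matrix U such that Uᴴ * (F + t•G) * U is diagonal for every real t (the flow F + t•G is indecomposable). Then for every real t the characteristic polynomial of F + t•G has two distinct roots; i.e., the two eigenvalue curves of the flow never intersect. -/
open Matrix

/-!
If the eigenvalue curves meet at the parameter `t`, then the hermitean matrix `F + t • G` has a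
single eigenvalue `c`, so it is the scalar matrix `c • 1`. Hence `F + s • G = c • 1 + (s - t) • G`
for every `s`, and a unitary matrix diagonalizing `G` alone diagonalizes the whole pencil.
-/

section

variable {𝕜 n : Type*} [RCLike 𝕜] [Fintype n] [DecidableEq n] {F G : Matrix n n 𝕜}

theorem exists_eq_smul_one_of_spectrum_subsingleton {A : Matrix n n 𝕜} (hA : A.IsHermitian)
    (hspec : (spectrum ℝ A).Subsingleton) : ∃ c : ℝ, A = (c : 𝕜) • 1 := by
  obtain ⟨c, hc⟩ : ∃ c : ℝ, spectrum ℝ A ⊆ {c} := by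
    rcases hspec.eq_empty_or_singleton with hempty | ⟨c, hc⟩
    · exact ⟨0, hempty ▸ Set.empty_subset _⟩
    · exact ⟨c, hc.subset⟩
  refine ⟨c, ?_⟩
  rw [CFC.eq_algebraMap_of_spectrum_subset_singleton A c hc hA, Algebra.algebraMap_eq_smul_one,
    RCLike.real_smul_eq_coe_smul (K := 𝕜)]

theorem isDiag_conjTranspose_mul_smul_one_add_smul_mul {U : Matrix n n 𝕜} (hU : Uᴴ * U = 1)
    (hG : (Uᴴ * G * U).IsDiag) (a b : 𝕜) : (Uᴴ * (a • 1 + b • G) * U).IsDiag := by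
  have hconj : Uᴴ * (a • 1 + b • G) * U = a • 1 + b • (Uᴴ * G * U) := by
    simp only [mul_add, add_mul, mul_smul_comm, smul_mul_assoc, mul_one, hU]
  rw [hconj]
  exact (isDiag_smul_one n a).add (hG.smul b)

theorem exists_unitary_isDiag_conjTranspose_mul_mul (hG : G.IsHermitian) :
    ∃ U : Matrix n n 𝕜, Uᴴ * U = 1 ∧ (Uᴴ * G * U).IsDiag := by
  refine ⟨hG.eigenvectorUnitary, Unitary.coe_star_mul_self _, ?_⟩
  have hdiag := hG.conjStarAlgAut_star_eigenvectorUnitary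
  rw [Unitary.conjStarAlgAut_star_apply, star_eq_conjTranspose] at hdiag
  rw [hdiag]
  exact isDiag_diagonal _

theorem exists_unitary_isDiag_pencil_of_eq_smul_one (hG : G.IsHermitian) {t c : 𝕜}
    (hscalar : F + t • G = c • 1) :
    ∃ U : Matrix n n 𝕜, Uᴴ * U = 1 ∧ ∀ s : 𝕜, (Uᴴ * (F + s • G) * U).IsDiag := by
  obtain ⟨U, hU, hdiag⟩ := exists_unitary_isDiag_conjTranspose_mul_mul hG
  refine ⟨U, hU, fun s => ?_⟩
  have hpencil : F + s • G = c • 1 + (s - t) • G := by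
    rw [← hscalar]
    module
  rw [hpencil]
  exact isDiag_conjTranspose_mul_smul_one_add_smul_mul hU hdiag c (s - t)

theorem hermitean_pencil_indecomposable_no_crossing_general
    (hF : F.IsHermitian) (hG : G.IsHermitian)
    (hindec : ¬ ∃ U : Matrix n n 𝕜, Uᴴ * U = 1 ∧
      ∀ t : ℝ, (Uᴴ * (F + (t : 𝕜) • G) * U).IsDiag) (t : ℝ) :
    ∃ μ₁ μ₂ : 𝕜, μ₁ ≠ μ₂ ∧
      (F + (t : 𝕜) • G).charpoly.IsRoot μ₁ ∧ (F + (t : 𝕜) • G).charpoly.IsRoot μ₂ := by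
  have hA : (F + (t : 𝕜) • G).IsHermitian := hF.add (hG.smul (RCLike.conj_ofReal t))
  have hspec : (spectrum ℝ (F + (t : 𝕜) • G)).Nontrivial := by
    rw [← Set.not_subsingleton_iff]
    intro hsub
    obtain ⟨c, hc⟩ := exists_eq_smul_one_of_spectrum_subsingleton hA hsub
    obtain ⟨U, hU, hdiag⟩ := exists_unitary_isDiag_pencil_of_eq_smul_one hG hc
    exact hindec ⟨U, hU, fun s => hdiag s⟩
  obtain ⟨μ₁, hμ₁, μ₂, hμ₂, hne⟩ := hspec
  rw [← spectrum.algebraMap_mem_iff 𝕜, mem_spectrum_iff_isRoot_charpoly] at hμ₁ hμ₂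
  exact ⟨_, _, (algebraMap ℝ 𝕜).injective.ne hne, hμ₁, hμ₂⟩

end

/-- Hund–von Neumann–Wigner no-crossing theorem for indecomposable 2×2 hermitean pencils:
if no fixed unitary `U` diagonalizes `F + t•G` simultaneously for all real `t`, then for
every `t` the characteristic polynomial of `F + t•G` has two distinct roots: the two
eigenvalue curves of the flow never intersect. -/
theorem hermitean_pencil_indecomposable_no_crossing
    (F G : Matrix (Fin 2) (Fin 2) ℂ) (hF : Fᴴ = F) (hG : Gᴴ = G)
    (hindec : ¬ ∃ U : Matrix (Fin 2) (Fin 2) ℂ, Uᴴ * U = 1 ∧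
      ∀ t : ℝ, ∀ i j : Fin 2, i ≠ j → (Uᴴ * (F + (t : ℂ) • G) * U) i j = 0) :
    ∀ t : ℝ, ∃ μ₁ μ₂ : ℂ, μ₁ ≠ μ₂ ∧
      (F + (t : ℂ) • G).charpoly.IsRoot μ₁ ∧ (F + (t : ℂ) • G).charpoly.IsRoot μ₂ :=
  hermitean_pencil_indecomposable_no_crossing_general hF hG
    fun ⟨U, hU, hdiag⟩ => hindec ⟨U, hU, fun t _ _ hij => hdiag t hij⟩
end
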